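/- Let K be an imaginary quadratic number field. Let x, y ∈ K be distinct, and let a, b, c, d ∈ 𝒪_K with b ≠ 0, d ≠ 0, x = a/b and y = c/d. Then x and y are K-Farey neighbours if and only if N_{K/ℚ}(x − y) · N(b𝒪_K) · N(d𝒪_K) = N(a𝒪_K + b𝒪_K) · N(c𝒪_K + d𝒪_K), where N denotes the absolute ideal norm. (This equality expresses the tangency of the canonical horoballs in hyperbolic 3-space centered at x and y, namely the Euclidean balls of radius r_x = N(a𝒪_K + b𝒪_K)/(2 N(b𝒪_K)) centered at (σ(x), r_x) ∈ ℂ × ℝ, and similarly for y.) -/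

import Mathlib

/-!
For any representatives `(a, b)`, `(c, d)` of `x ≠ y`, the ideal `(a, b)(c, d)` contains
`ad - bc ≠ 0`, so it equals `(ad - bc)` exactly when the two ideals have the same absolute norm
(`span_mul_span_eq_iff`). When `b, d ≠ 0`, `x - y = (ad - bc) / (bd)`, and since the norm of an
imaginary quadratic field is nonnegative (`norm_nonneg_of_imaginary`),
`N(ad - bc) = N(x - y) N(b) N(d)` (`norm_sub_mul`). Hence the stated equality is equivalent to
the ideal identity for the given representatives. It does not depend on the representatives:
if `a / b = a' / b'` then `(a, b)(b') = (a', b')(b)`, so that `N(a, b) / N(b) = N(a', b') / N(b')`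
(`absNorm_span_pair_mul`).
-/

noncomputable section
open scoped Classical
open NumberField

/-- The point `p/q` of the projective line `ℙ¹(K) = K ∪ {∞}`, with the convention
`a/0 = ∞`. -/
def projPt {K : Type*} [Field K] (p q : K) : OnePoint K :=
  if q = 0 then OnePoint.infty else ((p / q : K) : OnePoint K)

variable (K : Type*) [Field K] [NumberField K]

/-- A pair `(a, b) ∈ 𝒪_K × 𝒪_K`, not both zero, represents `x ∈ ℙ¹(K) = K ∪ {∞}` if
`x = a/b` when `b ≠ 0` and `x = ∞` when `b = 0`. -/
def Represents (a b : 𝓞 K) (x : OnePoint K) : Prop :=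
  (a, b) ≠ (0, 0) ∧ x = projPt (a : K) (b : K)

/-- Two distinct elements `x, y ∈ ℙ¹(K)` are `K`-Farey neighbours if there exist
representatives `(a, b)` of `x` and `(c, d)` of `y` with
`(a𝒪_K + b𝒪_K)(c𝒪_K + d𝒪_K) = (ad − bc)𝒪_K`. -/
def KFareyNbr (x y : OnePoint K) : Prop :=
  x ≠ y ∧ ∃ a b c d : 𝓞 K, Represents K a b x ∧ Represents K c d y ∧
    Ideal.span {a, b} * Ideal.span {c, d} = Ideal.span {a * d - b * c}

section helpers

variable {K : Type*} [Field K] [NumberField K]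

/-- The complex embeddings of an imaginary quadratic field are a conjugate pair `φ, φ̄`, so the
norm of `z` is `φ z * conj (φ z)`. -/
lemma norm_nonneg_of_imaginary (h2 : Module.finrank ℚ K = 2) (hr : IsEmpty (K →+* ℝ)) (z : K) :
    0 ≤ Algebra.norm ℚ z := by
  have hcard : Fintype.card (K →ₐ[ℚ] ℂ) = 2 := by rw [AlgHom.card, h2]
  obtain ⟨φ⟩ : Nonempty (K →ₐ[ℚ] ℂ) := by
    rw [← Fintype.card_pos_iff]; omega
  let ψ : K →ₐ[ℚ] ℂ := (ComplexEmbedding.conjugate (φ : K →+* ℂ)).toRatAlgHom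
  have hψ : ∀ w, ψ w = starRingEnd ℂ (φ w) := fun w => rfl
  have hne : φ ≠ ψ := by
    intro h
    have hreal : ComplexEmbedding.IsReal (φ : K →+* ℂ) := by
      rw [ComplexEmbedding.isReal_iff]
      ext w
      exact (DFunLike.congr_fun h w).symm
    exact hr.false hreal.embedding
  have huniv : (Finset.univ : Finset (K →ₐ[ℚ] ℂ)) = {φ, ψ} := by
    symm
    rw [← Finset.card_eq_iff_eq_univ, Finset.card_pair hne, hcard]
  have hprod := Algebra.norm_eq_prod_embeddings ℚ ℂ z
  rw [huniv, Finset.prod_pair hne, hψ, Complex.mul_conj] at hprod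
  have hq : ((Algebra.norm ℚ z : ℚ) : ℝ) = Complex.normSq (φ z) := by
    apply Complex.ofReal_injective
    rw [← hprod]
    simp
  have hnn : (0 : ℝ) ≤ ((Algebra.norm ℚ z : ℚ) : ℝ) := hq ▸ Complex.normSq_nonneg _
  exact_mod_cast hnn

lemma absNorm_span_singleton_cast (z : 𝓞 K) :
    (Ideal.absNorm (Ideal.span {z}) : ℚ) = |Algebra.norm ℚ (z : K)| := by
  rw [Ideal.absNorm_span_singleton, ← Algebra.coe_norm_int, Nat.cast_natAbs, Int.cast_abs]

/-- A product of two ideals generated by pairs contains the determinant of the generators, so it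
is generated by the determinant as soon as the norms agree. -/
lemma span_mul_span_eq_iff (a b c d : 𝓞 K) (h : a * d - b * c ≠ 0) :
    Ideal.span {a, b} * Ideal.span {c, d} = Ideal.span {a * d - b * c} ↔
      Ideal.absNorm (Ideal.span {a, b}) * Ideal.absNorm (Ideal.span {c, d}) =
        Ideal.absNorm (Ideal.span {a * d - b * c}) := by
  rw [← map_mul]
  refine ⟨fun e => by rw [e], fun e => ?_⟩
  have hle : Ideal.span {a * d - b * c} ≤ Ideal.span {a, b} * Ideal.span {c, d} := by
    rw [Ideal.span_singleton_le_iff_mem]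
    refine Ideal.sub_mem _ (Ideal.mul_mem_mul ?_ ?_) (Ideal.mul_mem_mul ?_ ?_) <;>
      exact Ideal.subset_span (by simp)
  obtain ⟨J, hJ⟩ := Ideal.dvd_iff_le.mpr hle
  have h0 : Ideal.absNorm (Ideal.span {a * d - b * c}) ≠ 0 := by
    rwa [Ne, Ideal.absNorm_eq_zero_iff, Ideal.span_singleton_eq_bot]
  have hN := congrArg Ideal.absNorm hJ
  rw [map_mul, e] at hN
  have hJ1 : Ideal.absNorm J = 1 := (mul_eq_left₀ h0).mp hN.symm
  rw [Ideal.absNorm_eq_one_iff] at hJ1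
  rw [hJ, hJ1, Ideal.mul_top]

lemma absNorm_span_pair_mul (a b a' b' : 𝓞 K) (h : a * b' = a' * b) :
    Ideal.absNorm (Ideal.span {a, b}) * Ideal.absNorm (Ideal.span {b'}) =
      Ideal.absNorm (Ideal.span {a', b'}) * Ideal.absNorm (Ideal.span {b}) := by
  rw [← map_mul, ← map_mul, Ideal.span_mul_span', Ideal.span_mul_span', Set.mul_singleton,
    Set.mul_singleton, Set.image_pair, Set.image_pair, h, mul_comm b b']

lemma norm_sub_mul (h2 : Module.finrank ℚ K = 2) (hr : IsEmpty (K →+* ℝ))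
    {x y : K} {a b c d : 𝓞 K} (hb : b ≠ 0) (hd : d ≠ 0)
    (hx : x = (a : K) / (b : K)) (hy : y = (c : K) / (d : K)) :
    Algebra.norm ℚ (x - y) * (Ideal.absNorm (Ideal.span {b}) : ℚ) *
        (Ideal.absNorm (Ideal.span {d}) : ℚ) =
      (Ideal.absNorm (Ideal.span {a * d - b * c}) : ℚ) := by
  have hb' : (b : K) ≠ 0 := by simpa using hb
  have hd' : (d : K) ≠ 0 := by simpa using hd
  have key : ((a * d - b * c : 𝓞 K) : K) = (x - y) * b * d := by
    rw [hx, hy]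
    push_cast
    field_simp
  have nn := norm_nonneg_of_imaginary h2 hr
  rw [absNorm_span_singleton_cast, absNorm_span_singleton_cast, absNorm_span_singleton_cast,
    abs_of_nonneg (nn _), abs_of_nonneg (nn _), abs_of_nonneg (nn _), key, map_mul, map_mul]

lemma det_ne_zero {x y : K} (hxy : x ≠ y) {a b c d : 𝓞 K} (hb : b ≠ 0) (hd : d ≠ 0)
    (hx : x = (a : K) / (b : K)) (hy : y = (c : K) / (d : K)) : a * d - b * c ≠ 0 := by
  have hb' : (b : K) ≠ 0 := by simpa using hb
  have hd' : (d : K) ≠ 0 := by simpa using hd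
  intro h
  apply hxy
  rw [hx, hy, div_eq_div_iff hb' hd']
  have := congrArg (algebraMap (𝓞 K) K) h
  simp only [map_sub, map_mul, map_zero] at this
  linear_combination this

/-- The norm equality for a given choice of representatives is the Farey ideal identity for that
same choice. -/
lemma span_mul_span_eq_iff_norm (h2 : Module.finrank ℚ K = 2) (hr : IsEmpty (K →+* ℝ))
    {x y : K} (hxy : x ≠ y) {a b c d : 𝓞 K} (hb : b ≠ 0) (hd : d ≠ 0)
    (hx : x = (a : K) / (b : K)) (hy : y = (c : K) / (d : K)) :
    Ideal.span {a, b} * Ideal.span {c, d} = Ideal.span {a * d - b * c} ↔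
      Algebra.norm ℚ (x - y) * (Ideal.absNorm (Ideal.span {b}) : ℚ) *
          (Ideal.absNorm (Ideal.span {d}) : ℚ) =
        (Ideal.absNorm (Ideal.span {a, b}) : ℚ) * (Ideal.absNorm (Ideal.span {c, d}) : ℚ) := by
  rw [span_mul_span_eq_iff a b c d (det_ne_zero hxy hb hd hx hy),
    norm_sub_mul h2 hr hb hd hx hy, eq_comm]
  norm_cast

lemma represents_coe_iff (a b : 𝓞 K) (x : K) :
    Represents K a b (x : OnePoint K) ↔ b ≠ 0 ∧ x = (a : K) / (b : K) := by
  unfold Represents projPt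
  by_cases hb : b = 0
  · simp [hb]
  · simp [hb]

lemma absNorm_span_pair_mul_of_div_eq {x : K} {a b a' b' : 𝓞 K} (hb : b ≠ 0) (hb' : b' ≠ 0)
    (hx : x = (a : K) / (b : K)) (hx' : x = (a' : K) / (b' : K)) :
    (Ideal.absNorm (Ideal.span {a, b}) : ℚ) * (Ideal.absNorm (Ideal.span {b'}) : ℚ) =
      (Ideal.absNorm (Ideal.span {a', b'}) : ℚ) * (Ideal.absNorm (Ideal.span {b}) : ℚ) := by
  have h1 : (b : K) ≠ 0 := by simpa using hb
  have h2 : (b' : K) ≠ 0 := by simpa using hb'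
  have h : a * b' = a' * b := by
    apply RingOfIntegers.ext
    push_cast
    rwa [hx, div_eq_div_iff h1 h2] at hx'
  exact_mod_cast absNorm_span_pair_mul a b a' b' h

lemma absNorm_span_singleton_cast_ne_zero {b : 𝓞 K} (hb : b ≠ 0) :
    (Ideal.absNorm (Ideal.span {b}) : ℚ) ≠ 0 := by
  rwa [Nat.cast_ne_zero, Ne, Ideal.absNorm_eq_zero_iff, Ideal.span_singleton_eq_bot]

end helpers

/-- Let `K` be an imaginary quadratic number field, let `x ≠ y` in `K`, and let
`a, b, c, d ∈ 𝒪_K` with `b ≠ 0`, `d ≠ 0`, `x = a/b` and `y = c/d`. Then `x` and `y` are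
`K`-Farey neighbours if and only if
`N_{K/ℚ}(x − y) · N(b𝒪_K) · N(d𝒪_K) = N(a𝒪_K + b𝒪_K) · N(c𝒪_K + d𝒪_K)`,
expressing the tangency of the canonical horoballs centered at `x` and `y`. -/
theorem KFareyNbr_iff_norm_eq
    (h2 : Module.finrank ℚ K = 2) (hr : IsEmpty (K →+* ℝ))
    (x y : K) (hxy : x ≠ y) (a b c d : 𝓞 K) (hb : b ≠ 0) (hd : d ≠ 0)
    (hx : x = (a : K) / (b : K)) (hy : y = (c : K) / (d : K)) :
    KFareyNbr K (x : OnePoint K) (y : OnePoint K) ↔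
      Algebra.norm ℚ (x - y) *
          (Ideal.absNorm (Ideal.span {b} : Ideal (𝓞 K)) : ℚ) *
          (Ideal.absNorm (Ideal.span {d} : Ideal (𝓞 K)) : ℚ) =
        (Ideal.absNorm (Ideal.span {a, b} : Ideal (𝓞 K)) : ℚ) *
          (Ideal.absNorm (Ideal.span {c, d} : Ideal (𝓞 K)) : ℚ) := by
  rw [← span_mul_span_eq_iff_norm h2 hr hxy hb hd hx hy]
  constructor
  · rintro ⟨-, a', b', c', d', h1, h1', h⟩
    obtain ⟨hb', hx'⟩ := (represents_coe_iff _ _ _).mp h1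
    obtain ⟨hd', hy'⟩ := (represents_coe_iff _ _ _).mp h1'
    rw [span_mul_span_eq_iff_norm h2 hr hxy hb' hd' hx' hy'] at h
    rw [span_mul_span_eq_iff_norm h2 hr hxy hb hd hx hy]
    have e1 := absNorm_span_pair_mul_of_div_eq hb hb' hx hx'
    have e2 := absNorm_span_pair_mul_of_div_eq hd hd' hy hy'
    have n1 := absNorm_span_singleton_cast_ne_zero hb'
    have n2 := absNorm_span_singleton_cast_ne_zero hd'
    -- Clear the denominators `N(b') N(d')` and transport each factor along `e1`, `e2`.
    apply mul_right_cancel₀ (mul_ne_zero n1 n2)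
    rw [mul_mul_mul_comm (Ideal.absNorm (Ideal.span {a, b}) : ℚ), e1, e2]
    linear_combination
      (Ideal.absNorm (Ideal.span {b}) : ℚ) * (Ideal.absNorm (Ideal.span {d}) : ℚ) * h
  · intro h
    exact ⟨by simpa using hxy, a, b, c, d, (represents_coe_iff _ _ _).mpr ⟨hb, hx⟩,
      (represents_coe_iff _ _ _).mpr ⟨hd, hy⟩, h⟩
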